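/- Let β* ∈ ℝ^p with support H = {j : β*_j ≠ 0}, and let β̂ ∈ ℝ^p satisfy β̂_j = 0 for all j ∉ H. Suppose: (i) for every j ∈ H, |β̂_j − β*_j| < |β*_j| and ℓ̇_j(β̂) + 2λ₂·β̂_j = −λ₁·sgn(β*_j); and (ii) for every j ∉ H, |ℓ̇_j(β̂)| ≤ λ₁. Then β̂ is a global minimizer of F(β) = ℓ(β) + λ₁·‖β‖₁ + λ₂·‖β‖₂² over ℝ^p, and sgn(β̂_j) = sgn(β*_j) for every j ∈ {1,…,p} (with the convention sgn(0) = 0). -/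

import Mathlib

open Real BigOperators Finset MeasureTheory

/-- Inner product of a row of the design matrix with a coefficient vector. -/
def dotp {p : ℕ} (u v : Fin p → ℝ) : ℝ := ∑ j, u j * v j

/-- Average negative binomial negative log-likelihood. -/
noncomputable def negLogLik (n p : ℕ) (θ : ℝ) (x : Fin n → Fin p → ℝ)
    (y : Fin n → ℝ) (β : Fin p → ℝ) : ℝ :=
  -(1 / (n : ℝ)) *
    ∑ i, (y i * dotp (x i) β - (θ + y i) * Real.log (θ + Real.exp (dotp (x i) β)))

/-- Elastic-net objective function. -/
noncomputable def enObj (n p : ℕ) (θ : ℝ) (x : Fin n → Fin p → ℝ) (y : Fin n → ℝ)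
    (lam1 lam2 : ℝ) (β : Fin p → ℝ) : ℝ :=
  negLogLik n p θ x y β + lam1 * ∑ j, |β j| + lam2 * ∑ j, (β j) ^ 2

/-- `j`-th component of the gradient of the average negative log-likelihood. -/
noncomputable def gradComp (n p : ℕ) (θ : ℝ) (x : Fin n → Fin p → ℝ) (y : Fin n → ℝ)
    (β : Fin p → ℝ) (j : Fin p) : ℝ :=
  (1 / (n : ℝ)) *
    ∑ i, x i j * θ * (Real.exp (dotp (x i) β) - y i) / (θ + Real.exp (dotp (x i) β))

/-!
Everything reduces to the calculus of subgradients. The negative binomial loss lies above its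
tangent lines in the linear predictor, by Jensen's inequality for `exp`, so `gradComp` is a
subgradient of `negLogLik`. Closeness forces `betah` to share the signs of `betas`, which turns the
two stationarity conditions into the statement that minus the gradient of the smooth part is a
subgradient of `lam1 * ‖·‖₁` at `betah`. Hence `0` is a subgradient of the objective at `betah`.
-/

theorem sign_eq_sign_of_abs_sub_lt {a b : ℝ} (h : |b - a| < |a|) : Real.sign b = Real.sign a := by
  rcases lt_trichotomy a 0 with ha | rfl | ha
  · rw [abs_of_neg ha] at h
    rw [Real.sign_of_neg ha, Real.sign_of_neg (by linarith [(abs_lt.1 h).2])]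
  · rw [abs_zero] at h
    exact absurd h (abs_nonneg _).not_gt
  · rw [abs_of_pos ha] at h
    rw [Real.sign_of_pos ha, Real.sign_of_pos (by linarith [(abs_lt.1 h).1])]

theorem real_sign_mul_self_eq_abs (r : ℝ) : Real.sign r * r = |r| := by
  rcases lt_trichotomy r 0 with hr | rfl | hr
  · rw [Real.sign_of_neg hr, abs_of_neg hr, neg_one_mul]
  · rw [mul_zero, abs_zero]
  · rw [Real.sign_of_pos hr, abs_of_pos hr, one_mul]

theorem abs_real_sign_le_one (r : ℝ) : |Real.sign r| ≤ 1 := by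
  rcases Real.sign_apply_eq r with h | h | h <;> simp [h]

section Subgradient

variable {ι κ : Type*} [Fintype ι] {f f' : (ι → ℝ) → ℝ} {g g' b : ι → ℝ}

/-- `g` is a subgradient of `f` at `b`: the affine function through `(b, f b)` with slope `g`
supports `f` from below on the whole space. The slope is given by its coordinates and paired through
`⬝ᵥ`, to match coordinatewise stationarity conditions; `f` need not be convex. -/
def IsSubgradientAt (f : (ι → ℝ) → ℝ) (g b : ι → ℝ) : Prop :=
  ∀ β, f b + g ⬝ᵥ (β - b) ≤ f β

namespace IsSubgradientAt

theorem le_of_zero (h : IsSubgradientAt f 0 b) (β : ι → ℝ) : f b ≤ f β := by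
  simpa only [zero_dotProduct, add_zero] using h β

theorem add (h : IsSubgradientAt f g b) (h' : IsSubgradientAt f' g' b) :
    IsSubgradientAt (fun β => f β + f' β) (g + g') b := fun β => by
  rw [add_dotProduct]
  linarith [h β, h' β]

theorem const_mul {c : ℝ} (hc : 0 ≤ c) (h : IsSubgradientAt f g b) :
    IsSubgradientAt (fun β => c * f β) (c • g) b := fun β => by
  rw [smul_dotProduct, smul_eq_mul, ← mul_add]
  exact mul_le_mul_of_nonneg_left (h β) hc

theorem sum (s : Finset κ) {f : κ → (ι → ℝ) → ℝ} {g : κ → ι → ℝ}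
    (h : ∀ k ∈ s, IsSubgradientAt (f k) (g k) b) :
    IsSubgradientAt (fun β => ∑ k ∈ s, f k β) (∑ k ∈ s, g k) b := fun β => by
  rw [sum_dotProduct, ← Finset.sum_add_distrib]
  exact Finset.sum_le_sum fun k hk => h k hk β

theorem comp_dotProduct {φ : ℝ → ℝ} {d : ℝ} (a : ι → ℝ)
    (h : ∀ s, φ (a ⬝ᵥ b) + d * (s - a ⬝ᵥ b) ≤ φ s) :
    IsSubgradientAt (fun β => φ (a ⬝ᵥ β)) (d • a) b := fun β => by
  rw [smul_dotProduct, smul_eq_mul, dotProduct_sub]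
  exact h (a ⬝ᵥ β)

theorem sum_coord {φ : ι → ℝ → ℝ} {d : ι → ℝ}
    (h : ∀ j s, φ j (b j) + d j * (s - b j) ≤ φ j s) :
    IsSubgradientAt (fun β => ∑ j, φ j (β j)) d b := fun β => by
  rw [dotProduct, ← Finset.sum_add_distrib]
  exact Finset.sum_le_sum fun j _ => h j (β j)

theorem mul_sum_abs {c : ℝ} {v : ι → ℝ} (hv : ∀ j, |v j| ≤ c) (hvb : ∀ j, v j * b j = c * |b j|) :
    IsSubgradientAt (fun β => c * ∑ j, |β j|) v b := by
  simp only [Finset.mul_sum]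
  refine sum_coord (φ := fun _ t => c * |t|) fun j s => ?_
  calc c * |b j| + v j * (s - b j) = v j * s := by rw [← hvb j]; ring
    _ ≤ |v j| * |s| := (le_abs_self _).trans_eq (abs_mul _ _)
    _ ≤ c * |s| := mul_le_mul_of_nonneg_right (hv j) (abs_nonneg s)

theorem sum_sq (b : ι → ℝ) : IsSubgradientAt (fun β => ∑ j, β j ^ 2) ((2 : ℝ) • b) b := by
  refine sum_coord (φ := fun _ t => t ^ 2) fun j s => ?_
  rw [Pi.smul_apply, smul_eq_mul]
  linarith [sq_nonneg (s - b j)]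

theorem elasticNet_le {lam1 lam2 : ℝ} (hlam1 : 0 ≤ lam1) (hlam2 : 0 ≤ lam2)
    (hg : IsSubgradientAt f g b)
    (hkkt_ne : ∀ j, b j ≠ 0 → g j + 2 * lam2 * b j = -lam1 * Real.sign (b j))
    (hkkt_zero : ∀ j, b j = 0 → |g j| ≤ lam1) (β : ι → ℝ) :
    f b + lam1 * ∑ j, |b j| + lam2 * ∑ j, b j ^ 2 ≤
      f β + lam1 * ∑ j, |β j| + lam2 * ∑ j, β j ^ 2 := by
  set v : ι → ℝ := -(g + lam2 • (2 : ℝ) • b) with hv_def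
  have hv_apply (j) : v j = -(g j + 2 * lam2 * b j) := by
    simp only [hv_def, Pi.neg_apply, Pi.add_apply, Pi.smul_apply, smul_eq_mul]
    ring
  have hv_ne (j) (hj : b j ≠ 0) : v j = lam1 * Real.sign (b j) := by
    rw [hv_apply, hkkt_ne j hj, neg_mul, neg_neg]
  have hv_le (j) : |v j| ≤ lam1 := by
    by_cases hj : b j = 0
    · simpa only [hv_apply, hj, mul_zero, add_zero, abs_neg] using hkkt_zero j hj
    · rw [hv_ne j hj, abs_mul, abs_of_nonneg hlam1]
      exact mul_le_of_le_one_right hlam1 (abs_real_sign_le_one _)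
  have hv_mul (j) : v j * b j = lam1 * |b j| := by
    by_cases hj : b j = 0
    · rw [hj, mul_zero, abs_zero, mul_zero]
    · rw [hv_ne j hj, mul_assoc, real_sign_mul_self_eq_abs]
  have hsub := (hg.add (mul_sum_abs hv_le hv_mul)).add ((sum_sq b).const_mul hlam2)
  have hzero : g + v + lam2 • (2 : ℝ) • b = 0 := by rw [hv_def]; abel
  rw [hzero] at hsub
  exact hsub.le_of_zero β

end IsSubgradientAt

end Subgradient

theorem log_add_exp_tangent_le {θ : ℝ} (hθ : 0 ≤ θ) (s t : ℝ) :
    Real.log (θ + Real.exp t) + Real.exp t / (θ + Real.exp t) * (s - t) ≤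
      Real.log (θ + Real.exp s) := by
  have hT : 0 < θ + Real.exp t := by positivity
  have hS : 0 < θ + Real.exp s := by positivity
  have jensen : Real.exp (Real.exp t / (θ + Real.exp t) * (s - t)) ≤
      θ / (θ + Real.exp t) + Real.exp t / (θ + Real.exp t) * Real.exp (s - t) := by
    simpa only [smul_eq_mul, mul_zero, zero_add, Real.exp_zero, mul_one] using
      convexOn_exp.2 (Set.mem_univ 0) (Set.mem_univ (s - t))
        (show 0 ≤ θ / (θ + Real.exp t) by positivity)
        (show 0 ≤ Real.exp t / (θ + Real.exp t) by positivity) (by field_simp)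
  rw [Real.le_log_iff_exp_le hS, Real.exp_add, Real.exp_log hT]
  calc (θ + Real.exp t) * Real.exp (Real.exp t / (θ + Real.exp t) * (s - t))
      ≤ (θ + Real.exp t) *
          (θ / (θ + Real.exp t) + Real.exp t / (θ + Real.exp t) * Real.exp (s - t)) :=
        mul_le_mul_of_nonneg_left jensen hT.le
    _ = θ + Real.exp s := by rw [Real.exp_sub]; field_simp

/-- The negative binomial negative log-likelihood of one response `y`, up to terms constant in `t`,
as a function of its linear predictor `t`. -/
noncomputable def nbLoss (θ y t : ℝ) : ℝ :=
  (θ + y) * Real.log (θ + Real.exp t) - y * t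

theorem nbLoss_tangent_le {θ y : ℝ} (hθ : 0 ≤ θ) (hθy : 0 ≤ θ + y) (t s : ℝ) :
    nbLoss θ y t + θ * (Real.exp t - y) / (θ + Real.exp t) * (s - t) ≤ nbLoss θ y s := by
  have slope : θ * (Real.exp t - y) / (θ + Real.exp t) =
      (θ + y) * (Real.exp t / (θ + Real.exp t)) - y := by
    field_simp
    ring
  have tangent := mul_le_mul_of_nonneg_left (log_add_exp_tangent_le hθ s t) hθy
  rw [nbLoss, nbLoss, slope]
  linarith

theorem negLogLik_eq_sum_nbLoss (n p : ℕ) (θ : ℝ) (x : Fin n → Fin p → ℝ) (y : Fin n → ℝ)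
    (β : Fin p → ℝ) :
    negLogLik n p θ x y β = (1 / (n : ℝ)) * ∑ i, nbLoss θ (y i) (x i ⬝ᵥ β) := by
  rw [negLogLik, neg_mul, ← mul_neg, ← Finset.sum_neg_distrib]
  simp only [neg_sub, nbLoss, dotp, dotProduct]

theorem gradComp_eq_sum_smul (n p : ℕ) (θ : ℝ) (x : Fin n → Fin p → ℝ) (y : Fin n → ℝ)
    (β : Fin p → ℝ) :
    gradComp n p θ x y β = (1 / (n : ℝ)) •
      ∑ i, (θ * (Real.exp (x i ⬝ᵥ β) - y i) / (θ + Real.exp (x i ⬝ᵥ β))) • x i := by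
  ext j
  simp only [gradComp, Pi.smul_apply, Finset.sum_apply, smul_eq_mul, dotp, dotProduct]
  congr 1
  exact Finset.sum_congr rfl fun i _ => by ring

theorem isSubgradientAt_negLogLik {n p : ℕ} {θ : ℝ} (hθ : 0 ≤ θ) (x : Fin n → Fin p → ℝ)
    {y : Fin n → ℝ} (hθy : ∀ i, 0 ≤ θ + y i) (b : Fin p → ℝ) :
    IsSubgradientAt (negLogLik n p θ x y) (gradComp n p θ x y b) b := by
  rw [funext (negLogLik_eq_sum_nbLoss n p θ x y), gradComp_eq_sum_smul]
  exact .const_mul (by positivity) <| .sum _ fun i _ =>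
    .comp_dotProduct (x i) (nbLoss_tangent_le hθ (hθy i) _)

theorem stmt19_general {ι : Type*} [Fintype ι] {f : (ι → ℝ) → ℝ} {g betas betah : ι → ℝ}
    {lam1 lam2 : ℝ} (hlam1 : 0 ≤ lam1) (hlam2 : 0 ≤ lam2) (hg : IsSubgradientAt f g betah)
    (hzero : ∀ j, betas j = 0 → betah j = 0)
    (hclose : ∀ j, betas j ≠ 0 → |betah j - betas j| < |betas j|)
    (hkktH : ∀ j, betas j ≠ 0 → g j + 2 * lam2 * betah j = -lam1 * Real.sign (betas j))
    (hkktHc : ∀ j, betas j = 0 → |g j| ≤ lam1) :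
    (∀ β, f betah + lam1 * ∑ j, |betah j| + lam2 * ∑ j, betah j ^ 2 ≤
        f β + lam1 * ∑ j, |β j| + lam2 * ∑ j, β j ^ 2) ∧
      ∀ j, Real.sign (betah j) = Real.sign (betas j) := by
  have hsign (j) : Real.sign (betah j) = Real.sign (betas j) := by
    by_cases hj : betas j = 0
    · rw [hj, hzero j hj]
    · exact sign_eq_sign_of_abs_sub_lt (hclose j hj)
  have hsupp (j) : betah j = 0 ↔ betas j = 0 := by
    rw [← Real.sign_eq_zero_iff, hsign, Real.sign_eq_zero_iff]
  refine ⟨hg.elasticNet_le hlam1 hlam2 (fun j hj => ?_) fun j hj => ?_, hsign⟩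
  · rw [hsign]
    exact hkktH j (mt (hsupp j).2 hj)
  · exact hkktHc j ((hsupp j).1 hj)

theorem stmt19
    (n p : ℕ) (hn : 1 ≤ n) (hp : 1 ≤ p)
    (θ : ℝ) (hθ : 0 < θ)
    (x : Fin n → Fin p → ℝ) (y : Fin n → ℝ) (hy : ∀ i, 0 ≤ y i)
    (lam1 lam2 : ℝ) (hlam1 : 0 < lam1) (hlam2 : 0 < lam2)
    (betas betah : Fin p → ℝ)
    (hzero : ∀ j, betas j = 0 → betah j = 0)
    (hclose : ∀ j, betas j ≠ 0 → |betah j - betas j| < |betas j|)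
    (hkktH : ∀ j, betas j ≠ 0 →
      gradComp n p θ x y betah j + 2 * lam2 * betah j = -lam1 * Real.sign (betas j))
    (hkktHc : ∀ j, betas j = 0 → |gradComp n p θ x y betah j| ≤ lam1) :
    (∀ β : Fin p → ℝ,
        enObj n p θ x y lam1 lam2 betah ≤ enObj n p θ x y lam1 lam2 β) ∧
      ∀ j, Real.sign (betah j) = Real.sign (betas j) :=
  stmt19_general hlam1.le hlam2.le
    (isSubgradientAt_negLogLik hθ.le x (fun i => add_nonneg hθ.le (hy i)) betah)
    hzero hclose hkktH hkktHc
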